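/- arXiv:2012.13380 — 2 statements merged into one kernel-verified Lean document; each statement's English description precedes it below -/
import Mathlib

section
/- For every real number x with 0 ≤ x ≤ 1/2 and every real number n ≥ 1, one has (1 - x/n)^n ≤ 1 - (7/9)·x. -/
/-!
The power is at most `exp (-x)`, and by convexity `exp` lies below its chord over `[-1/2, 0]`.
The constant `7/9` comes from `exp (-1/2) ≤ 11/18 = 1 - (7/9) * (1/2)`.
-/

theorem one_sub_div_rpow_le_exp_neg {x n : ℝ} (hn : 0 < n) (hxn : x ≤ n) :
    (1 - x / n) ^ n ≤ Real.exp (-x) := by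
  have base_nonneg : 0 ≤ 1 - x / n := sub_nonneg.2 ((div_le_one hn).2 hxn)
  calc
    (1 - x / n) ^ n ≤ Real.exp (-(x / n)) ^ n :=
      Real.rpow_le_rpow base_nonneg (Real.one_sub_le_exp_neg _) hn.le
    _ = Real.exp (-x) := by
      rw [← Real.exp_mul, neg_mul, div_mul_cancel₀ x hn.ne']

theorem convexOn_exp_sub_const_mul (c : ℝ) :
    ConvexOn ℝ Set.univ fun y : ℝ ↦ Real.exp y - c * y :=
  convexOn_exp.sub ((LinearMap.mulLeft ℝ c).concaveOn convex_univ)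

theorem exp_le_one_add_mul_of_mem_uIcc {a c y : ℝ} (ha : Real.exp a ≤ 1 + c * a)
    (hy : y ∈ Set.uIcc a 0) : Real.exp y ≤ 1 + c * y := by
  have le_endpoints : Real.exp y - c * y ≤ max (Real.exp a - c * a) (Real.exp 0 - c * 0) :=
    (convexOn_exp_sub_const_mul c).le_max_of_mem_segment (Set.mem_univ a) (Set.mem_univ 0)
      (segment_eq_uIcc a 0 ▸ hy)
  have endpoints_le : max (Real.exp a - c * a) (Real.exp 0 - c * 0) ≤ 1 :=
    max_le (by linarith) (by simp)
  linarith

theorem exp_neg_half_le : Real.exp (-1 / 2) ≤ 11 / 18 := by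
  rw [Real.exp_half, Real.sqrt_le_left (by norm_num)]
  exact Real.exp_neg_one_lt_d9.le.trans (by norm_num)

theorem stmt_0_general {x n b c : ℝ} (hx : 0 ≤ x) (hxb : x ≤ b) (hn : 0 < n) (hxn : x ≤ n)
    (hb : Real.exp (-b) ≤ 1 - c * b) : (1 - x / n) ^ n ≤ 1 - c * x := by
  have exp_le_chord : Real.exp (-x) ≤ 1 + c * -x :=
    exp_le_one_add_mul_of_mem_uIcc (a := -b) (by linarith)
      (Set.mem_uIcc_of_le (neg_le_neg hxb) (neg_nonpos.2 hx))
  linarith [one_sub_div_rpow_le_exp_neg hn hxn]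

/-- Lemma 4 of the paper: for `0 ≤ x ≤ 1/2` and real `n ≥ 1`,
`(1 - x/n)^n ≤ 1 - (7/9)·x`, where the power is the real power. -/
theorem stmt_0 (x n : ℝ) (hx0 : 0 ≤ x) (hx1 : x ≤ 1/2) (hn : 1 ≤ n) :
    (1 - x / n) ^ n ≤ 1 - (7/9) * x :=
  stmt_0_general hx0 hx1 (by linarith) (by linarith) <| by
    rw [← neg_div]
    exact exp_neg_half_le.trans (by norm_num)
end

section
/- Let k ≥ 1, T > 1, α > 0 and ε > 0 be real numbers with k·T^{α/2} ≥ 2 and T^ε > (log T)/(2·log(18/11)). Then (T / (k·T^{α/2 + ε})) · (1 - 1/(k·T^{α/2}))^{k·T^{α/2 + ε}} < T^{-α/2} / k. -/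
/-!
Write `m = k * T ^ (α / 2)` and `x = T ^ ε`, so that an interval has length `m * x` and the claimed
bound is `1 / m`. From `1 - p < exp (-p)` with `p = 1 / m`, the probability of missing the arm
throughout an interval is less than `exp (-x)`, so it suffices that `T ≤ x * exp x`. Taking
logarithms, this says `(1 - ε) * log T ≤ T ^ ε`. The hypothesis with the constant
`2 * log (18 / 11)` implies this because `(18 / 11) ^ 2 < e`.
-/

theorem one_sub_rpow_lt_exp_neg_mul {p y : ℝ} (hp₀ : p ≠ 0) (hp₁ : p ≤ 1) (hy : 0 < y) :
    (1 - p) ^ y < Real.exp (-(p * y)) :=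
  calc (1 - p) ^ y < Real.exp (-p) ^ y :=
        Real.rpow_lt_rpow (sub_nonneg.2 hp₁) (Real.one_sub_lt_exp_neg hp₀) hy
    _ = Real.exp (-(p * y)) := by rw [← Real.exp_mul, neg_mul]

theorem div_mul_one_sub_one_div_rpow_lt_one_div {m x T : ℝ} (hm : 1 ≤ m) (hx : 0 < x)
    (hT : T ≤ x * Real.exp x) :
    T / (m * x) * (1 - 1 / m) ^ (m * x) < 1 / m := by
  have hm₀ : 0 < m := one_pos.trans_le hm
  have hp : 1 / m ≤ 1 := (div_le_one hm₀).2 hm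
  have miss_lt : (1 - 1 / m) ^ (m * x) < Real.exp (-x) := by
    have := one_sub_rpow_lt_exp_neg_mul (one_div_ne_zero hm₀.ne') hp (mul_pos hm₀ hx)
    rwa [← mul_assoc, one_div_mul_cancel hm₀.ne', one_mul] at this
  calc T / (m * x) * (1 - 1 / m) ^ (m * x)
      ≤ x * Real.exp x / (m * x) * (1 - 1 / m) ^ (m * x) := by
        have := Real.rpow_nonneg (sub_nonneg.2 hp) (m * x)
        gcongr
    _ < x * Real.exp x / (m * x) * Real.exp (-x) := by gcongr
    _ = 1 / m := by rw [Real.exp_neg]; field_simp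

theorem le_rpow_mul_exp_rpow_iff {T ε : ℝ} (hT : 0 < T) :
    T ≤ T ^ ε * Real.exp (T ^ ε) ↔ (1 - ε) * Real.log T ≤ T ^ ε := by
  have hx : 0 < T ^ ε := Real.rpow_pos_of_pos hT ε
  rw [← Real.log_le_log_iff hT (by positivity), Real.log_mul hx.ne' (Real.exp_ne_zero _),
    Real.log_rpow hT, Real.log_exp, one_sub_mul, sub_le_iff_le_add']

theorem two_mul_log_eighteen_div_eleven_lt_one : 2 * Real.log (18 / 11) < 1 := by
  have sq_lt_exp : (18 / 11 : ℝ) ^ 2 < Real.exp 1 :=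
    lt_trans (by norm_num) Real.exp_one_gt_d9
  calc 2 * Real.log (18 / 11) = Real.log ((18 / 11) ^ 2) := by rw [Real.log_pow, Nat.cast_ofNat]
    _ < 1 := (Real.log_lt_iff_lt_exp (by norm_num)).2 sq_lt_exp

theorem one_sub_mul_log_le_of_log_div_le {T ε x : ℝ} (hT : 1 ≤ T) (hε : 0 ≤ ε)
    (h : Real.log T / (2 * Real.log (18 / 11)) ≤ x) : (1 - ε) * Real.log T ≤ x := by
  have hlog : 0 ≤ Real.log T := Real.log_nonneg hT
  have hc : 0 < 2 * Real.log (18 / 11) := mul_pos two_pos (Real.log_pos (by norm_num))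
  calc (1 - ε) * Real.log T ≤ Real.log T := mul_le_of_le_one_left hlog (sub_le_self 1 hε)
    _ ≤ Real.log T / (2 * Real.log (18 / 11)) :=
        le_div_self hlog hc two_mul_log_eighteen_div_eleven_lt_one.le
    _ ≤ x := h

theorem stmt_7_general {k T α ε : ℝ} (hT : 0 < T) (hm : 1 ≤ k * T ^ (α / 2))
    (h : (1 - ε) * Real.log T ≤ T ^ ε) :
    (T / (k * T ^ (α / 2 + ε))) * (1 - 1 / (k * T ^ (α / 2))) ^ (k * T ^ (α / 2 + ε)) <
      T ^ (-(α / 2)) / k := by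
  have length_eq : k * T ^ (α / 2 + ε) = k * T ^ (α / 2) * T ^ ε := by
    rw [Real.rpow_add hT, mul_assoc]
  have bound_eq : T ^ (-(α / 2)) / k = 1 / (k * T ^ (α / 2)) := by
    rw [Real.rpow_neg hT.le, inv_eq_one_div, div_div, mul_comm]
  rw [length_eq, bound_eq]
  exact div_mul_one_sub_one_div_rpow_lt_one_div hm (Real.rpow_pos_of_pos hT ε)
    ((le_rpow_mul_exp_rpow_iff hT).2 h)

/-- Deterministic core of Lemma 1 of the paper: for reals `k ≥ 1`, `T > 1`,
`α > 0`, `ε > 0` with `k·T^{α/2} ≥ 2` and `T^ε > (log T)/(2 log(18/11))`,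
`(T/(k·T^{α/2+ε}))·(1 - 1/(k·T^{α/2}))^{k·T^{α/2+ε}} < T^{-α/2}/k`
(all powers are real powers). -/
theorem stmt_7 (k T α ε : ℝ) (hk : 1 ≤ k) (hT : 1 < T) (hα : 0 < α) (hε : 0 < ε)
    (h2 : 2 ≤ k * T ^ (α/2))
    (h : Real.log T / (2 * Real.log (18/11)) < T ^ ε) :
    (T / (k * T ^ (α/2 + ε))) * (1 - 1 / (k * T ^ (α/2))) ^ (k * T ^ (α/2 + ε)) <
      T ^ (-(α/2)) / k :=
  stmt_7_general (one_pos.trans hT) (one_le_two.trans h2)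
    (one_sub_mul_log_le_of_log_div_le hT.le hε.le h.le)
end
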